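/- arXiv:cmp-lg/9404001 — 4 statements merged into one kernel-verified Lean document; each statement's English description precedes it below -/
import Mathlib

section
/- Swap of two adjunctions at distinct addresses (Lemma of the Appendix): Let σ be a type, let E, A, B : List ℕ → Option σ be trees, let fA, fB : List ℕ be the foot addresses of A and B, and let t, t' : List ℕ be addresses with t ≠ t'. Then adjoin (adjoin E A t fA) B (update t' fA t) fB = adjoin (adjoin E B t' fB) A (update t fB t') fA, i.e., adjoining A at t and then B at the updated address of t' yields the same tree (as a function on all addresses) as adjoining B at t' and then A at the updated address of t. -/
/-- Adjunction of an auxiliary tree `A` with foot address `f` at address `t` in tree `E`. -/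
def adjoin {σ : Type*} (E A : List ℕ → Option σ) (t f : List ℕ) : List ℕ → Option σ :=
  fun r =>
    if t <+: r then
      let u := r.drop t.length
      if f <+: u then E (t ++ u.drop f.length) else A u
    else E r

/-- Address update after adjunction of a tree with foot `f` at address `t`. -/
def update (s f t : List ℕ) : List ℕ :=
  if t <+: s ∧ t ≠ s then t ++ f ++ s.drop t.length else s

/-!
Adjoining `A` at `t` leaves everything outside `t` alone, puts `A` at `t`, and moves the old
subtree at `t` to `t ++ fA`; these three facts determine the result. If `t' = t ++ v` lies below
`t`, then in either order the subtree found at `t ++ fA` is the old subtree at `t` with `B`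
adjoined at the relative address `v`. If `t` and `t'` are incomparable, each adjunction leaves the
subtree at the other address unchanged.
-/

/-- The subtree of `E` rooted at the address `t`, with its nodes addressed relative to `t`; two
adjunctions are compared through the subtrees they leave at given addresses. Since `E` is an
arbitrary labeling, `t` itself need not be a node. -/
def subtreeAt {σ : Type*} (E : List ℕ → Option σ) (t : List ℕ) : List ℕ → Option σ :=
  fun u => E (t ++ u)

section Subtree

variable {σ : Type*} (E A : List ℕ → Option σ) (t f : List ℕ)

theorem subtreeAt_adjoin_append (v : List ℕ) :
    subtreeAt (adjoin E A (t ++ v) f) t = adjoin (subtreeAt E t) A v f := by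
  funext u
  simp [subtreeAt, adjoin, ← List.drop_drop]

theorem subtreeAt_adjoin_self :
    subtreeAt (adjoin E A t f) t = adjoin (subtreeAt E t) A [] f := by
  simpa using subtreeAt_adjoin_append E A t f []

theorem subtreeAt_adjoin_foot :
    subtreeAt (adjoin E A t f) (t ++ f) = subtreeAt E t := by
  funext u
  simp [subtreeAt, adjoin]

variable {t}

theorem adjoin_apply_of_not_prefix {r : List ℕ} (h : ¬ t <+: r) : adjoin E A t f r = E r :=
  if_neg h

theorem subtreeAt_adjoin_of_incomparable {t' : List ℕ} (h : ¬ t <+: t') (h' : ¬ t' <+: t) :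
    subtreeAt (adjoin E A t' f) t = subtreeAt E t := by
  funext u
  have hu : ¬ t' <+: t ++ u := fun hp =>
    (List.prefix_or_prefix_of_prefix (List.prefix_append t u) hp).elim h h'
  exact adjoin_apply_of_not_prefix E A f hu

variable {f}

theorem adjoin_apply_append_of_not_prefix {u : List ℕ} (h : ¬ f <+: u) :
    adjoin E A t f (t ++ u) = A u := by
  simp [adjoin, h]

variable {E A}

theorem eq_adjoin {F : List ℕ → Option σ} (outside : ∀ r, ¬ t <+: r → F r = E r)
    (inside : ∀ u, ¬ f <+: u → F (t ++ u) = A u)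
    (below : subtreeAt F (t ++ f) = subtreeAt E t) : F = adjoin E A t f := by
  funext r
  by_cases ht : t <+: r
  · obtain ⟨u, rfl⟩ := ht
    by_cases hf : f <+: u
    · obtain ⟨w, rfl⟩ := hf
      rw [← List.append_assoc]
      exact congrFun (below.trans (subtreeAt_adjoin_foot E A t f).symm) w
    · rw [inside u hf, adjoin_apply_append_of_not_prefix E A hf]
  · rw [outside r ht, adjoin_apply_of_not_prefix E A f ht]

end Subtree

section Update

variable {s t v : List ℕ} (f : List ℕ)

theorem update_append (hv : v ≠ []) : update (t ++ v) f t = t ++ f ++ v := by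
  simp [update, hv]

theorem update_of_not_prefix (h : ¬ t <+: s) : update s f t = s :=
  if_neg fun hp => h hp.1

theorem update_of_prefix (h : s <+: t) : update s f t = s :=
  if_neg fun hp => hp.2 (hp.1.eq_of_length_le h.length_le)

end Update

section Swap

variable {σ : Type*} (E A B : List ℕ → Option σ) (fA fB : List ℕ)

theorem adjoin_adjoin_append (t v : List ℕ) :
    adjoin (adjoin E A t fA) B (t ++ fA ++ v) fB = adjoin (adjoin E B (t ++ v) fB) A t fA := by
  apply eq_adjoin
  · intro r hr
    have not_below (z : List ℕ) : ¬ t ++ z <+: r := fun hz => hr ((List.prefix_append t z).trans hz)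
    rw [List.append_assoc, adjoin_apply_of_not_prefix _ B fB (not_below _),
      adjoin_apply_of_not_prefix E A fA hr, adjoin_apply_of_not_prefix E B fB (not_below _)]
  · intro u hu
    have not_below_foot : ¬ t ++ fA ++ v <+: t ++ u := by
      rw [List.append_assoc, List.prefix_append_right_inj]
      exact fun hp => hu ((List.prefix_append fA v).trans hp)
    rw [adjoin_apply_of_not_prefix _ B fB not_below_foot, adjoin_apply_append_of_not_prefix E A hu]
  · rw [subtreeAt_adjoin_append, subtreeAt_adjoin_foot, subtreeAt_adjoin_append]

variable {t t' : List ℕ}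

theorem subtreeAt_adjoin_adjoin_of_incomparable (h : ¬ t <+: t') (h' : ¬ t' <+: t) :
    subtreeAt (adjoin (adjoin E A t fA) B t' fB) t =
      subtreeAt (adjoin (adjoin E B t' fB) A t fA) t := by
  rw [subtreeAt_adjoin_of_incomparable _ B fB h h', subtreeAt_adjoin_self, subtreeAt_adjoin_self,
    subtreeAt_adjoin_of_incomparable E B fB h h']

theorem adjoin_comm_of_incomparable (h : ¬ t <+: t') (h' : ¬ t' <+: t) :
    adjoin (adjoin E A t fA) B t' fB = adjoin (adjoin E B t' fB) A t fA := by
  funext r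
  by_cases ht : t <+: r
  · obtain ⟨u, rfl⟩ := ht
    exact congrFun (subtreeAt_adjoin_adjoin_of_incomparable E A B fA fB h h') u
  by_cases ht' : t' <+: r
  · obtain ⟨u, rfl⟩ := ht'
    exact congrFun (subtreeAt_adjoin_adjoin_of_incomparable E B A fB fA h' h).symm u
  simp only [adjoin_apply_of_not_prefix _ _ _ ht, adjoin_apply_of_not_prefix _ _ _ ht']

theorem adjoin_swap_of_prefix (h : t ≠ t') (hp : t <+: t') :
    adjoin (adjoin E A t fA) B (update t' fA t) fB
      = adjoin (adjoin E B t' fB) A (update t fB t') fA := by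
  rw [update_of_prefix fB hp]
  obtain ⟨v, rfl⟩ := hp
  have hv : v ≠ [] := by simpa using h
  rw [update_append fA hv, adjoin_adjoin_append]

end Swap

/-- Swap of two adjunctions at distinct addresses (Lemma of the Appendix). -/
theorem adjoin_swap {σ : Type*} (E A B : List ℕ → Option σ) (fA fB t t' : List ℕ)
    (h : t ≠ t') :
    adjoin (adjoin E A t fA) B (update t' fA t) fB
      = adjoin (adjoin E B t' fB) A (update t fB t') fA := by
  by_cases htt' : t <+: t'
  · exact adjoin_swap_of_prefix E A B fA fB h htt'
  by_cases ht't : t' <+: t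
  · exact (adjoin_swap_of_prefix E B A fB fA h.symm ht't).symm
  rw [update_of_not_prefix fA htt', update_of_not_prefix fB ht't]
  exact adjoin_comm_of_incomparable E A B fA fB htt' ht't
end

section
/- Adjunctions at prefix-incomparable addresses commute (case 3 of the Lemma): Let σ be a type, E, A, B : List ℕ → Option σ trees with foot addresses fA, fB, and t, t' : List ℕ addresses such that ¬ t <+: t' and ¬ t' <+: t. Then adjoin (adjoin E A t fA) B t' fB = adjoin (adjoin E B t' fB) A t fA. -/
/- Adjunction at `t` changes labels only at addresses extending `t`, and the new labels depend on
the host tree only through its subtree at `t`. Subtrees at incomparable addresses are disjoint, so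
neither adjunction affects the other. -/

theorem not_prefix_append_of_incomparable {α : Type*} {s t : List α} (hst : ¬ s <+: t)
    (hts : ¬ t <+: s) (u : List α) : ¬ s <+: t ++ u := fun hs =>
  (List.prefix_or_prefix_of_prefix hs (List.prefix_append t u)).elim hst hts

section Adjoin

variable {σ : Type*} {E E' : List ℕ → Option σ} {t r : List ℕ}

theorem adjoin_of_not_prefix (A : List ℕ → Option σ) (f : List ℕ) (h : ¬ t <+: r) :
    adjoin E A t f r = E r :=
  if_neg h

theorem adjoin_append (E A : List ℕ → Option σ) (t f u : List ℕ) :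
    adjoin E A t f (t ++ u) = if f <+: u then E (t ++ u.drop f.length) else A u := by
  simp only [adjoin, List.prefix_append, if_true, List.drop_left]

theorem adjoin_append_congr (h : ∀ u, E (t ++ u) = E' (t ++ u)) (A : List ℕ → Option σ)
    (f u : List ℕ) : adjoin E A t f (t ++ u) = adjoin E' A t f (t ++ u) := by
  simp only [adjoin_append, h]

theorem adjoin_comm_append_of_incomparable {t' : List ℕ} (E A B : List ℕ → Option σ)
    (fA fB : List ℕ) (h1 : ¬ t <+: t') (h2 : ¬ t' <+: t) (u : List ℕ) :
    adjoin (adjoin E A t fA) B t' fB (t' ++ u) = adjoin (adjoin E B t' fB) A t fA (t' ++ u) := by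
  have not_below (v : List ℕ) : ¬ t <+: t' ++ v := not_prefix_append_of_incomparable h1 h2 v
  calc adjoin (adjoin E A t fA) B t' fB (t' ++ u)
    _ = adjoin E B t' fB (t' ++ u) :=
      adjoin_append_congr (fun v => adjoin_of_not_prefix A fA (not_below v)) B fB u
    _ = adjoin (adjoin E B t' fB) A t fA (t' ++ u) :=
      (adjoin_of_not_prefix A fA (not_below u)).symm

end Adjoin

/-- Adjunctions at prefix-incomparable addresses commute (case 3 of the Lemma). -/
theorem adjoin_comm_incomparable {σ : Type*} (E A B : List ℕ → Option σ)
    (fA fB t t' : List ℕ) (h1 : ¬ t <+: t') (h2 : ¬ t' <+: t) :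
    adjoin (adjoin E A t fA) B t' fB = adjoin (adjoin E B t' fB) A t fA := by
  funext r
  by_cases ht' : t' <+: r
  · obtain ⟨u, rfl⟩ := ht'
    exact adjoin_comm_append_of_incomparable E A B fA fB h1 h2 u
  by_cases ht : t <+: r
  · obtain ⟨u, rfl⟩ := ht
    exact (adjoin_comm_append_of_incomparable E B A fB fA h2 h1 u).symm
  · simp only [adjoin_of_not_prefix _ _ ht, adjoin_of_not_prefix _ _ ht']
end

section
/- Explicit value of the double update in the nested subcase (subcase t ≺ t' ≺ s of the Proposition's proof): For all addresses s, t, t' : List ℕ and foot addresses fA, fB : List ℕ, if t is a proper prefix of t' and t' is a proper prefix of s, then update (update s fA t) fB (update t' fA t) = t ++ fA ++ (t'.drop t.length) ++ fB ++ (s.drop t'.length). -/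
/-!
Since `t` is already a proper prefix of `t'`, updating `s = t' ++ v` at `t` leaves the tail `v`
alone: it gives `update t' fA t ++ v`. The outer update therefore inserts `fB` between
`update t' fA t` and `v`.
-/

theorem update_append_self {u : List ℕ} (hu : u ≠ []) (t f : List ℕ) :
    update (t ++ u) f t = t ++ f ++ u := by
  have ht : t <+: t ++ u ∧ t ≠ t ++ u := ⟨t.prefix_append u, by simpa using hu⟩
  rw [update, if_pos ht, List.drop_left]

theorem update_append_of_prefix {t s : List ℕ} (hts : t <+: s) (hne : t ≠ s) (f v : List ℕ) :
    update (s ++ v) f t = update s f t ++ v := by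
  obtain ⟨u, rfl⟩ := hts
  have hu : u ≠ [] := by simpa using hne
  have huv : u ++ v ≠ [] := List.append_ne_nil_of_left_ne_nil hu v
  rw [List.append_assoc, update_append_self huv, update_append_self hu, List.append_assoc _ u v]

/-- Explicit value of the double update in the nested subcase (t ≺ t' ≺ s). -/
theorem update_update_nested (s t t' fA fB : List ℕ)
    (h1 : t <+: t') (h2 : t ≠ t') (h3 : t' <+: s) (h4 : t' ≠ s) :
    update (update s fA t) fB (update t' fA t)
      = t ++ fA ++ (t'.drop t.length) ++ fB ++ (s.drop t'.length) := by
  obtain ⟨u, rfl⟩ := h1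
  obtain ⟨v, rfl⟩ := h3
  have hu : u ≠ [] := by simpa using h2
  have hv : v ≠ [] := by simpa using h4
  calc update (update (t ++ u ++ v) fA t) fB (update (t ++ u) fA t)
      = update (update (t ++ u) fA t ++ v) fB (update (t ++ u) fA t) := by
        rw [update_append_of_prefix (t.prefix_append u) h2]
    _ = update (t ++ u) fA t ++ fB ++ v := update_append_self hv _ fB
    _ = t ++ fA ++ u ++ fB ++ v := by rw [update_append_self hu]
    _ = t ++ fA ++ (t ++ u).drop t.length ++ fB ++ (t ++ u ++ v).drop (t ++ u).length := by
        rw [List.drop_left, List.drop_left]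
end

section
/- Updates at prefix-incomparable addresses commute (incomparable case of the Proposition's proof): For all addresses s, t, t' : List ℕ with ¬ t <+: t' and ¬ t' <+: t, and all foot addresses fA, fB : List ℕ, update (update s fA t) fB t' = update (update s fB t') fA t. -/
/-!
The prefixes of an address form a chain, so of two incomparable addresses `t` and `t'` at most one
is a prefix of `s`. An update at `t` keeps `t` as a prefix if it was one and leaves `s` unchanged
otherwise, so it never makes `t'` a prefix. Hence at most one of the two updates acts, in either
order.
-/

theorem not_prefix_of_prefix_of_incomparable {α : Type*} {l t t' : List α} (h : ¬ t <+: t')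
    (h' : ¬ t' <+: t) (ht : t <+: l) : ¬ t' <+: l :=
  fun ht' => (List.prefix_or_prefix_of_prefix ht ht').elim h h'

theorem update_eq_self_of_not_prefix {s t : List ℕ} (f : List ℕ) (ht : ¬ t <+: s) :
    update s f t = s :=
  if_neg fun hproper => ht hproper.1

theorem prefix_update {s t : List ℕ} (f : List ℕ) (ht : t <+: s) : t <+: update s f t := by
  unfold update
  split_ifs
  · exact (List.prefix_append t f).trans (List.prefix_append _ _)
  · exact ht

theorem prefix_update_iff_of_incomparable {s t t' : List ℕ} (f : List ℕ) (h : ¬ t <+: t')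
    (h' : ¬ t' <+: t) : t' <+: update s f t ↔ t' <+: s := by
  by_cases ht : t <+: s
  · exact iff_of_false (not_prefix_of_prefix_of_incomparable h h' (prefix_update f ht))
      (not_prefix_of_prefix_of_incomparable h h' ht)
  · rw [update_eq_self_of_not_prefix f ht]

theorem update_comm_of_incomparable_of_not_prefix {s t t' : List ℕ} (f f' : List ℕ)
    (h : ¬ t <+: t') (h' : ¬ t' <+: t) (ht' : ¬ t' <+: s) :
    update (update s f t) f' t' = update (update s f' t') f t := by
  have ht'_update : ¬ t' <+: update s f t :=
    (prefix_update_iff_of_incomparable f h h').not.mpr ht'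
  rw [update_eq_self_of_not_prefix f' ht'_update, update_eq_self_of_not_prefix f' ht']

/-- Updates at prefix-incomparable addresses commute. -/
theorem update_comm_incomparable (s t t' fA fB : List ℕ)
    (h1 : ¬ t <+: t') (h2 : ¬ t' <+: t) :
    update (update s fA t) fB t' = update (update s fB t') fA t := by
  by_cases ht' : t' <+: s
  · have ht : ¬ t <+: s := not_prefix_of_prefix_of_incomparable h2 h1 ht'
    exact (update_comm_of_incomparable_of_not_prefix fB fA h2 h1 ht).symm
  · exact update_comm_of_incomparable_of_not_prefix fA fB h1 h2 ht'
end
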